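/- Law of the few: in the local public good game under Assumption 1 (normality), fix a scalar ω > 0 and suppose w_i ≤ ω for all players i ∈ N as n → ∞. Then in every sociable Nash equilibrium the fraction of players in the core vanishes: lim_{n→∞} |C(ḡ*)|/n = 0. -/

import Mathlib

open Finset Function

noncomputable section

/-- A directed network on `n` players: `g i j = true` iff `i` sponsors a link to `j`. -/
abbrev Net (n : ℕ) := Fin n → Fin n → Bool

/-- The number of links sponsored by player `i`. -/
def deg {n : ℕ} (g : Net n) (i : Fin n) : ℕ :=
  (Finset.univ.filter fun j => g i j = true).card

/-- Spillovers received by player `i`: the provision of the players she links to. -/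
def spill {n : ℕ} (x : Fin n → ℝ) (g : Net n) (i : Fin n) : ℝ :=
  ∑ j, if g i j = true then x j else 0

/-- Public good consumption of player `i`: own provision plus spillovers. -/
def cons {n : ℕ} (x : Fin n → ℝ) (g : Net n) (i : Fin n) : ℝ :=
  x i + spill x g i

/-- The primitives of the local public good game: prices of the private good, wealths,
linking cost, utilities and induced Engel curves. -/
structure Game (n : ℕ) where
  p : Fin n → ℝ
  w : Fin n → ℝ
  k : ℝ
  U : Fin n → ℝ → ℝ → ℝ
  γ : Fin n → ℝ → ℝ
  p_pos : ∀ i, 0 < p i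
  w_pos : ∀ i, 0 < w i
  k_nonneg : 0 ≤ k
  U_smooth : ∀ i, ContDiff ℝ 2 fun q : ℝ × ℝ => U i q.1 q.2
  U_sconcave : ∀ i, StrictConcaveOn ℝ Set.univ fun q : ℝ × ℝ => U i q.1 q.2
  U_mono_x : ∀ i b, StrictMono fun a => U i a b
  U_mono_y : ∀ i a, StrictMono fun b => U i a b

/-- Net social income of player `i`. -/
def netInc {n : ℕ} (G : Game n) (x : Fin n → ℝ) (g : Net n) (i : Fin n) : ℝ :=
  G.w i - (deg g i : ℝ) * G.k + spill x g i

/-- Assumption 1 (normality): each Engel curve is continuously differentiable with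
derivative in `[0,1]`. -/
def NormalGame {n : ℕ} (G : Game n) : Prop :=
  ∀ i, ContDiff ℝ 1 (G.γ i) ∧ ∀ t : ℝ, deriv (G.γ i) t ∈ Set.Icc (0 : ℝ) 1

/-- `G.γ i` is the demand (Engel curve) induced by `U i`: on the budget line with
income `m`, and under the constraint that public good consumption is at least the
spillovers `s`, the optimal public good consumption is `max (γ i m) s`. -/
def EngelCompatible {n : ℕ} (G : Game n) : Prop :=
  ∀ (i : Fin n) (m s xb yb : ℝ), 0 ≤ s → s ≤ xb → 0 ≤ yb → xb + G.p i * yb = m →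
    (∀ xb' yb' : ℝ, s ≤ xb' → 0 ≤ yb' → xb' + G.p i * yb' = m →
      G.U i xb' yb' ≤ G.U i xb yb) →
    xb = max (G.γ i m) s

/-- Budget feasibility of player `i`'s strategy. -/
def Feasible {n : ℕ} (G : Game n) (x y : Fin n → ℝ) (g : Net n) (i : Fin n) : Prop :=
  0 ≤ x i ∧ 0 ≤ y i ∧ g i i = false ∧
    x i + G.p i * y i + (deg g i : ℝ) * G.k = G.w i

/-- Player `i`'s payoff. -/
def payoff {n : ℕ} (G : Game n) (x y : Fin n → ℝ) (g : Net n) (i : Fin n) : ℝ :=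
  G.U i (cons x g i) (y i)

/-- Replace row `i` of the network `g` by `r` (a unilateral linking deviation). -/
def updRow {n : ℕ} (g : Net n) (i : Fin n) (r : Fin n → Bool) : Net n :=
  fun a b => if a = i then r b else g a b

/-- Nash equilibrium: every player's strategy is feasible and no feasible unilateral
deviation (in provision, private consumption and links) improves her payoff. -/
def Nash {n : ℕ} (G : Game n) (x y : Fin n → ℝ) (g : Net n) : Prop :=
  (∀ i, Feasible G x y g i) ∧
  ∀ (i : Fin n) (xi yi : ℝ) (r : Fin n → Bool),
    Feasible G (Function.update x i xi) (Function.update y i yi) (updRow g i r) i →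
    payoff G (Function.update x i xi) (Function.update y i yi) (updRow g i r) i ≤
      payoff G x y g i

/-- Sociable Nash equilibrium: a Nash equilibrium in which any payoff-equivalent
deviation only uses links already established in equilibrium (players indifferent
about a link establish it). -/
def Sociable {n : ℕ} (G : Game n) (x y : Fin n → ℝ) (g : Net n) : Prop :=
  Nash G x y g ∧
  ∀ (i : Fin n) (xi yi : ℝ) (r : Fin n → Bool),
    Feasible G (Function.update x i xi) (Function.update y i yi) (updRow g i r) i →
    payoff G (Function.update x i xi) (Function.update y i yi) (updRow g i r) i =
      payoff G x y g i →
    ∀ j, r j = true → g i j = true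

/-- Strict Nash equilibrium: any feasible unilateral deviation that differs from the
equilibrium strategy strictly reduces the deviator's payoff. -/
def StrictNash {n : ℕ} (G : Game n) (x y : Fin n → ℝ) (g : Net n) : Prop :=
  (∀ i, Feasible G x y g i) ∧
  ∀ (i : Fin n) (xi yi : ℝ) (r : Fin n → Bool),
    Feasible G (Function.update x i xi) (Function.update y i yi) (updRow g i r) i →
    (xi ≠ x i ∨ yi ≠ y i ∨ r ≠ g i) →
    payoff G (Function.update x i xi) (Function.update y i yi) (updRow g i r) i <
      payoff G x y g i

/-- `(xi, yi)` is an optimal bundle for player `i` in isolation (no links). -/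
def IsoOpt {n : ℕ} (G : Game n) (i : Fin n) (xi yi : ℝ) : Prop :=
  0 ≤ xi ∧ 0 ≤ yi ∧ xi + G.p i * yi = G.w i ∧
    ∀ xi' yi' : ℝ, 0 ≤ xi' → 0 ≤ yi' → xi' + G.p i * yi' = G.w i →
      G.U i xi' yi' ≤ G.U i xi yi

/-- `g` is a core-periphery graph with core `C`: core players are mutually linked
(with reciprocated links), periphery players have no links among themselves, and
every non-isolated periphery player links to some core player. -/
def IsCorePeriphery {n : ℕ} (g : Net n) (C : Finset (Fin n)) : Prop :=
  (∀ i ∈ C, ∀ j ∈ C, i ≠ j → g i j = true ∧ g j i = true) ∧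
  (∀ i ∉ C, ∀ j ∉ C, g i j = false) ∧
  (∀ i ∉ C, (∃ j, g i j = true ∨ g j i = true) → ∃ l ∈ C, g i l = true)

/-- `g` is a nested split graph with core `C`: a core-periphery graph in which the
neighborhoods of periphery players are nested. -/
def IsNestedSplit {n : ℕ} (g : Net n) (C : Finset (Fin n)) : Prop :=
  IsCorePeriphery g C ∧
  ∀ i ∉ C, ∀ j ∉ C, deg g j ≤ deg g i → ∀ l, g j l = true → g i l = true

/-- The core of an equilibrium: the players contributing strictly more than the
linking cost. -/
def coreOf {n : ℕ} (G : Game n) (x : Fin n → ℝ) : Finset (Fin n) :=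
  Finset.univ.filter fun i => G.k < x i

/-- Adjacency in the closure of `g`. -/
def adjBar {n : ℕ} (g : Net n) (i j : Fin n) : Prop :=
  g i j = true ∨ g j i = true

/-- All players' consumption choices are optimal given the (fixed) network. -/
def ConsOpt {n : ℕ} (G : Game n) (x y : Fin n → ℝ) (g : Net n) : Prop :=
  ∀ i, Feasible G x y g i ∧
    ∀ xi yi : ℝ,
      Feasible G (Function.update x i xi) (Function.update y i yi) g i →
      payoff G (Function.update x i xi) (Function.update y i yi) g i ≤ payoff G x y g i

/-- Assumption 2: identical preferences and identical price of the private good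
(hence identical Engel curves). -/
def Homogeneous {n : ℕ} (G : Game n) : Prop :=
  ∀ i j, G.U i = G.U j ∧ G.p i = G.p j ∧ G.γ i = G.γ j

/-- Social welfare: the sum of individual payoffs. -/
def welfare {n : ℕ} (G : Game n) (x y : Fin n → ℝ) (g : Net n) : ℝ :=
  ∑ i, G.U i (cons x g i) (y i)

/-- Aggregate feasibility for the social planner: total provision, total private
consumption and total linking costs are financed by total wealth. -/
def FeasAgg {n : ℕ} (G : Game n) (x y : Fin n → ℝ) (g : Net n) : Prop :=
  (∀ i, 0 ≤ x i) ∧ (∀ i, 0 ≤ y i) ∧ (∀ i, g i i = false) ∧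
    ∑ i, x i + ∑ i, G.p i * y i + (∑ i, (deg g i : ℝ)) * G.k ≤ ∑ i, G.w i

/-- Efficient (welfare-maximizing) configuration. -/
def Efficient {n : ℕ} (G : Game n) (x y : Fin n → ℝ) (g : Net n) : Prop :=
  FeasAgg G x y g ∧
  ∀ (x' y' : Fin n → ℝ) (g' : Net n), FeasAgg G x' y' g' →
    welfare G x' y' g' ≤ welfare G x y g

/-- The same game with a different linking cost. -/
def Game.withCost {n : ℕ} (G : Game n) (k' : ℝ) (h : 0 ≤ k') : Game n :=
  { G with k := k', k_nonneg := h }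

/-- The same game with a different wealth distribution. -/
def Game.withWealth {n : ℕ} (G : Game n) (w' : Fin n → ℝ) (h : ∀ i, 0 < w' i) : Game n :=
  { G with w := w', w_pos := h }

/-- Budget feasibility with personalized public good prices `ρ` and lump-sum taxes `τ`. -/
def FeasibleT {n : ℕ} (G : Game n) (ρ τ : Fin n → ℝ) (x y : Fin n → ℝ) (g : Net n)
    (i : Fin n) : Prop :=
  0 ≤ x i ∧ 0 ≤ y i ∧ g i i = false ∧
    ρ i * x i + G.p i * y i + (deg g i : ℝ) * G.k = G.w i - τ i

/-- Nash equilibrium under personalized public good prices `ρ` and lump-sum taxes `τ`. -/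
def NashT {n : ℕ} (G : Game n) (ρ τ : Fin n → ℝ) (x y : Fin n → ℝ) (g : Net n) : Prop :=
  (∀ i, FeasibleT G ρ τ x y g i) ∧
  ∀ (i : Fin n) (xi yi : ℝ) (r : Fin n → Bool),
    FeasibleT G ρ τ (Function.update x i xi) (Function.update y i yi) (updRow g i r) i →
    payoff G (Function.update x i xi) (Function.update y i yi) (updRow g i r) i ≤
      payoff G x y g i

/-!
A core player who did not link to another core player `j` could cut her own provision by `k`,
sponsor that link instead, and gain `x j > k` in spillovers at an unchanged private consumption.
Hence every core player sponsors links to all the others; together with her own provision, which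
exceeds `k`, this costs her more than `k` times the size of the core. The core therefore has fewer
members than the number of links that the wealth of any one of them could buy.
-/

section Links

variable {n : ℕ} (x : Fin n → ℝ) (g : Net n) {i j : Fin n}

/-- The set `N_i(g)` of players to whom `i` sponsors a link. -/
def outNeighborFinset (i : Fin n) : Finset (Fin n) :=
  Finset.univ.filter fun j => g i j = true

/-- The network obtained from `g` when `i` sponsors a link to `j`, written as a unilateral
deviation of `i` so that the equilibrium conditions apply to it. -/
def addLink (i j : Fin n) : Net n :=
  updRow g i (Function.update (g i) j true)

variable {g}

lemma mem_outNeighborFinset : j ∈ outNeighborFinset g i ↔ g i j = true := by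
  simp [outNeighborFinset]

lemma notMem_outNeighborFinset : j ∉ outNeighborFinset g i ↔ g i j = false := by
  simp [outNeighborFinset]

lemma card_outNeighborFinset : (outNeighborFinset g i).card = deg g i :=
  rfl

lemma sum_outNeighborFinset : ∑ j ∈ outNeighborFinset g i, x j = spill x g i :=
  Finset.sum_filter _ _

lemma outNeighborFinset_addLink :
    outNeighborFinset (addLink g i j) i = insert j (outNeighborFinset g i) := by
  ext l
  by_cases hl : l = j <;> simp [outNeighborFinset, addLink, updRow, hl]

lemma addLink_self_eq_false (hij : i ≠ j) (hii : g i i = false) : addLink g i j i i = false := by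
  simp [addLink, updRow, hij, hii]

lemma deg_addLink (hg : g i j = false) : deg (addLink g i j) i = deg g i + 1 := by
  rw [← card_outNeighborFinset, outNeighborFinset_addLink,
    Finset.card_insert_of_notMem (notMem_outNeighborFinset.2 hg), card_outNeighborFinset]

lemma spill_addLink (hg : g i j = false) : spill x (addLink g i j) i = spill x g i + x j := by
  rw [← sum_outNeighborFinset, outNeighborFinset_addLink,
    Finset.sum_insert (notMem_outNeighborFinset.2 hg), sum_outNeighborFinset, add_comm]

lemma spill_update_self (hii : g i i = false) (a : ℝ) :
    spill (Function.update x i a) g i = spill x g i := by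
  rw [← sum_outNeighborFinset, Finset.sum_update_of_notMem (notMem_outNeighborFinset.2 hii),
    sum_outNeighborFinset]

end Links

section Equilibrium

variable {n : ℕ} {G : Game n} {x y : Fin n → ℝ} {g : Net n} {i j : Fin n}

lemma mem_coreOf : i ∈ coreOf G x ↔ G.k < x i := by
  simp [coreOf]

lemma Feasible.add_deg_mul_le (h : Feasible G x y g i) : x i + deg g i * G.k ≤ G.w i := by
  obtain ⟨-, hy, -, hbudget⟩ := h
  linarith [mul_nonneg (G.p_pos i).le hy]

lemma Feasible.addLink (h : Feasible G x y g i) (hij : i ≠ j) (hg : g i j = false)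
    (hi : G.k ≤ x i) : Feasible G (Function.update x i (x i - G.k)) y (addLink g i j) i := by
  obtain ⟨-, hy, hii, hbudget⟩ := h
  refine ⟨by simpa using hi, hy, addLink_self_eq_false hij hii, ?_⟩
  rw [deg_addLink hg, Function.update_self]
  push_cast
  linarith

lemma payoff_lt_payoff_addLink (hij : i ≠ j) (hii : g i i = false) (hg : g i j = false)
    (hj : G.k < x j) :
    payoff G x y g i < payoff G (Function.update x i (x i - G.k)) y (addLink g i j) i := by
  refine G.U_mono_x i (y i) ?_
  calc x i + spill x g i
      < x i - G.k + (spill x g i + x j) := by linarith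
    _ = Function.update x i (x i - G.k) i +
          spill (Function.update x i (x i - G.k)) (addLink g i j) i := by
        rw [Function.update_self, spill_update_self x (addLink_self_eq_false hij hii),
          spill_addLink x hg]

lemma Nash.link_of_le_of_lt (h : Nash G x y g) (hij : i ≠ j) (hi : G.k ≤ x i)
    (hj : G.k < x j) : g i j = true := by
  by_contra hg
  rw [Bool.not_eq_true] at hg
  have hfeas := (h.1 i).addLink hij hg hi
  have hgain : payoff G x y g i < payoff G (Function.update x i (x i - G.k)) y (addLink g i j) i :=
    payoff_lt_payoff_addLink hij (h.1 i).2.2.1 hg hj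
  have hdev := h.2 i (x i - G.k) (y i) (Function.update (g i) j true)
  rw [Function.update_eq_self] at hdev
  exact (hdev hfeas).not_gt hgain

lemma Nash.card_coreOf_le_deg_add_one (h : Nash G x y g) (hi : i ∈ coreOf G x) :
    (coreOf G x).card ≤ deg g i + 1 := by
  have hsub : (coreOf G x).erase i ⊆ outNeighborFinset g i := fun j hj => by
    obtain ⟨hji, hj⟩ := Finset.mem_erase.1 hj
    exact mem_outNeighborFinset.2 <|
      h.link_of_le_of_lt hji.symm (mem_coreOf.1 hi).le (mem_coreOf.1 hj)
  rw [← Finset.card_erase_add_one hi, ← card_outNeighborFinset]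
  gcongr

lemma Nash.card_coreOf_mul_lt (h : Nash G x y g) (hi : i ∈ coreOf G x) :
    (coreOf G x).card * G.k < G.w i := by
  have hcard : ((coreOf G x).card : ℝ) ≤ deg g i + 1 := by
    exact_mod_cast h.card_coreOf_le_deg_add_one hi
  calc (coreOf G x).card * G.k
      ≤ (deg g i + 1) * G.k := mul_le_mul_of_nonneg_right hcard G.k_nonneg
    _ = G.k + deg g i * G.k := by ring
    _ < x i + deg g i * G.k := by gcongr; exact mem_coreOf.1 hi
    _ ≤ G.w i := (h.1 i).add_deg_mul_le

lemma Nash.card_coreOf_lt (h : Nash G x y g) (hn : 0 < n) {ρ : ℝ}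
    (hw : ∀ i, G.w i ≤ ρ * G.k) : (coreOf G x).card < ρ := by
  refine lt_of_mul_lt_mul_right ?_ G.k_nonneg
  rcases (coreOf G x).eq_empty_or_nonempty with hempty | ⟨i, hi⟩
  · simpa [hempty] using (G.w_pos ⟨0, hn⟩).trans_le (hw ⟨0, hn⟩)
  · exact (h.card_coreOf_mul_lt hi).trans_le (hw i)

end Equilibrium

/-- `ρ n` bounds the number of links that a player of the `n`-th game can afford. -/
theorem law_of_the_few_general (G : ∀ n : ℕ, Game n) (ρ : ℕ → ℝ)
    (hw : ∀ n (i : Fin n), (G n).w i ≤ ρ n * (G n).k)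
    (hρ : Filter.Tendsto (fun n : ℕ => ρ n / n) Filter.atTop (nhds 0))
    (x y : ∀ n : ℕ, Fin n → ℝ) (g : ∀ n : ℕ, Net n)
    (h : ∀ n, Nash (G n) (x n) (y n) (g n)) :
    Filter.Tendsto (fun n : ℕ => ((coreOf (G n) (x n)).card : ℝ) / n)
      Filter.atTop (nhds 0) := by
  refine squeeze_zero' (Filter.Eventually.of_forall fun n => by positivity) ?_ hρ
  filter_upwards [Filter.eventually_gt_atTop 0] with n hn
  have hcard := (h n).card_coreOf_lt hn (hw n)
  gcongr

/-- law of the few: along a sequence of games with common linking cost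
`k > 0`, Assumption 1 and wealths uniformly bounded by `ω`, the fraction of players
in the core of any sequence of sociable Nash equilibria vanishes as `n → ∞`. -/
theorem law_of_the_few (ω k : ℝ) (hω : 0 < ω) (hk : 0 < k)
    (G : ∀ n : ℕ, Game n) (hGk : ∀ n, (G n).k = k)
    (hN : ∀ n, NormalGame (G n)) (hEC : ∀ n, EngelCompatible (G n))
    (hw : ∀ n (i : Fin n), (G n).w i ≤ ω)
    (x y : ∀ n : ℕ, Fin n → ℝ) (g : ∀ n : ℕ, Net n)
    (hS : ∀ n, Sociable (G n) (x n) (y n) (g n)) :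
    Filter.Tendsto
      (fun n : ℕ => (((Finset.univ.filter fun i : Fin n => k < x n i).card : ℝ) / n))
      Filter.atTop (nhds 0) := by
  simpa only [coreOf, hGk] using law_of_the_few_general G (fun _ => ω / k)
    (fun n i => by rw [hGk, div_mul_cancel₀ ω hk.ne']; exact hw n i)
    (tendsto_const_div_atTop_nhds_zero_nat (ω / k)) x y g fun n => (hS n).1
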